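/- Let f(x,y) = ax⁴+bx³y+cx²y²+dxy³+ey⁴ be a binary quartic form with real coefficients, with Δ(f) ≠ 0, and suppose f is ℝ-soluble, i.e., there exist (x₀,y₀,z₀) ∈ ℝ³ with (x₀,y₀) ≠ (0,0) and z₀² = f(x₀,y₀). Let I = I(f), J = J(f), and g(x) = x³ − (I/3)x − (J/27). Then both integrals below are finite and equal: ∫_{{x ∈ ℝ : f(x,1) > 0}} f(x,1)^{−1/2} dx = ∫_{{x ∈ ℝ : g(x) > 0}} g(x)^{−1/2} dx. -/

import Mathlib

noncomputable section

namespace BQPaper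

/-- A binary quartic form `a x⁴ + b x³y + c x²y² + d xy³ + e y⁴` over `R`,
recorded by its coefficients. -/
structure BQ (R : Type*) where
  a : R
  b : R
  c : R
  d : R
  e : R

/-- A 2×2 matrix `!![p, q; r, s]`, recorded by its entries. -/
structure Mat2 (R : Type*) where
  p : R
  q : R
  r : R
  s : R

variable {R S : Type*} [CommRing R] [CommRing S]

def Mat2.det (m : Mat2 R) : R := m.p * m.s - m.q * m.r

/-- Matrix product. -/
def Mat2.mul (m n : Mat2 R) : Mat2 R :=
  ⟨m.p * n.p + m.q * n.r, m.p * n.q + m.q * n.s,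
   m.r * n.p + m.s * n.r, m.r * n.q + m.s * n.s⟩

/-- Scalar multiple of a matrix. -/
def Mat2.smul (z : R) (m : Mat2 R) : Mat2 R := ⟨z * m.p, z * m.q, z * m.r, z * m.s⟩

def Mat2.map (φ : R →+* S) (m : Mat2 R) : Mat2 S := ⟨φ m.p, φ m.q, φ m.r, φ m.s⟩

/-- Evaluation of a binary quartic form at `(x, y)`. -/
def BQ.eval (f : BQ R) (x y : R) : R :=
  f.a * x ^ 4 + f.b * x ^ 3 * y + f.c * x ^ 2 * y ^ 2 + f.d * x * y ^ 3 + f.e * y ^ 4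

/-- The invariant `I(f) = 12ae − 3bd + c²`. -/
def BQ.invI (f : BQ R) : R := 12 * f.a * f.e - 3 * f.b * f.d + f.c ^ 2

/-- The invariant `J(f) = 72ace + 9bcd − 27ad² − 27eb² − 2c³`. -/
def BQ.invJ (f : BQ R) : R :=
  72 * f.a * f.c * f.e + 9 * f.b * f.c * f.d - 27 * f.a * f.d ^ 2
    - 27 * f.e * f.b ^ 2 - 2 * f.c ^ 3

/-- The discriminant of a binary quartic form; one has `Δ = (4I³ − J²)/27`. -/
def BQ.disc (f : BQ R) : R :=
  256 * f.a ^ 3 * f.e ^ 3 - 192 * f.a ^ 2 * f.b * f.d * f.e ^ 2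
    - 128 * f.a ^ 2 * f.c ^ 2 * f.e ^ 2 + 144 * f.a ^ 2 * f.c * f.d ^ 2 * f.e
    - 27 * f.a ^ 2 * f.d ^ 4 + 144 * f.a * f.b ^ 2 * f.c * f.e ^ 2
    - 6 * f.a * f.b ^ 2 * f.d ^ 2 * f.e - 80 * f.a * f.b * f.c ^ 2 * f.d * f.e
    + 18 * f.a * f.b * f.c * f.d ^ 3 + 16 * f.a * f.c ^ 4 * f.e
    - 4 * f.a * f.c ^ 3 * f.d ^ 2 - 27 * f.b ^ 4 * f.e ^ 2
    + 18 * f.b ^ 3 * f.c * f.d * f.e - 4 * f.b ^ 3 * f.d ^ 3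
    - 4 * f.b ^ 2 * f.c ^ 3 * f.e + f.b ^ 2 * f.c ^ 2 * f.d ^ 2

/-- Multiplication of all coefficients of a form by a scalar. -/
def BQ.rsmul (t : R) (f : BQ R) : BQ R := ⟨t * f.a, t * f.b, t * f.c, t * f.d, t * f.e⟩

/-- Substitution action of a 2×2 matrix on binary quartic forms:
`(m • f)(x,y) = f((x,y)·m) = f(px + ry, qx + sy)` for `m = !![p, q; r, s]`. -/
def BQ.subst (m : Mat2 R) (f : BQ R) : BQ R where
  a := f.a * m.p ^ 4 + f.b * m.p ^ 3 * m.q + f.c * m.p ^ 2 * m.q ^ 2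
      + f.d * m.p * m.q ^ 3 + f.e * m.q ^ 4
  b := 4 * f.a * m.p ^ 3 * m.r + f.b * m.p ^ 3 * m.s + 3 * f.b * m.p ^ 2 * m.q * m.r
      + 2 * f.c * m.p ^ 2 * m.q * m.s + 2 * f.c * m.p * m.q ^ 2 * m.r
      + 3 * f.d * m.p * m.q ^ 2 * m.s + f.d * m.q ^ 3 * m.r + 4 * f.e * m.q ^ 3 * m.s
  c := 6 * f.a * m.p ^ 2 * m.r ^ 2 + 3 * f.b * m.p ^ 2 * m.r * m.s
      + 3 * f.b * m.p * m.q * m.r ^ 2 + f.c * m.p ^ 2 * m.s ^ 2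
      + 4 * f.c * m.p * m.q * m.r * m.s + f.c * m.q ^ 2 * m.r ^ 2
      + 3 * f.d * m.p * m.q * m.s ^ 2 + 3 * f.d * m.q ^ 2 * m.r * m.s
      + 6 * f.e * m.q ^ 2 * m.s ^ 2
  d := 4 * f.a * m.p * m.r ^ 3 + 3 * f.b * m.p * m.r ^ 2 * m.s + f.b * m.q * m.r ^ 3
      + 2 * f.c * m.p * m.r * m.s ^ 2 + 2 * f.c * m.q * m.r ^ 2 * m.s
      + f.d * m.p * m.s ^ 3 + 3 * f.d * m.q * m.r * m.s ^ 2 + 4 * f.e * m.q * m.s ^ 3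
  e := f.a * m.r ^ 4 + f.b * m.r ^ 3 * m.s + f.c * m.r ^ 2 * m.s ^ 2
      + f.d * m.r * m.s ^ 3 + f.e * m.s ^ 4

/-- The twisted action `(γ·f)(x,y) = f((x,y)·γ)/det(γ)²`, which descends to `PGL₂`.
(`Ring.inverse` is the genuine inverse when `det` is a unit.) -/
def BQ.twist (m : Mat2 R) (f : BQ R) : BQ R :=
  BQ.rsmul (Ring.inverse m.det ^ 2) (f.subst m)

/-- Coefficientwise map of forms along a ring homomorphism. -/
def BQ.map (φ : R →+* S) (f : BQ R) : BQ S := ⟨φ f.a, φ f.b, φ f.c, φ f.d, φ f.e⟩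

end BQPaper

namespace BQPaper

open MeasureTheory

/-! The period `∫ dx/z` over the real points of `z² = f(x, y)` is the integral of an invariant
differential, so it does not change under `PGL₂(ℝ)`. A soluble form of nonzero discriminant takes
a positive value, since a zero that is a maximum would be singular. Moving a point where `f > 0`
to infinity turns `f` into `x⁴ + cx² + dx + e`, and then
`(x, z) ↦ (u, v) = (c - 2(z - x²), 2xu + d)` maps `z² = f(x)` to a translate
`v² = u³ - 2cu² + (c² - 4e)u + d²` of the Jacobian, with `du/v = -dx/z`. Off finitely many points
this is a bijection on real points, cut into four pieces by the signs of `z` and `v`. On either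
curve the integral over the line is the sum of two pieces, for each choice of the other sign, so
twice the period is the sum of all four pieces.

Finiteness holds because the zeros of `f` are simple, also at infinity. -/

section LocalIntegrability

open Filter Topology Asymptotics

lemma locallyIntegrable_inv_sqrt_abs_sub (r : ℝ) :
    LocallyIntegrable fun x : ℝ ↦ (√|x - r|)⁻¹ := by
  have h0 : LocallyIntegrable fun x : ℝ ↦ (√|x|)⁻¹ := by
    refine locallyIntegrable_of_norm_le_rpow (C := 1) (α := 1 / 2) (by simp) (by norm_num)
      (.of_forall fun x ↦ ?_) (by fun_prop)
    rw [Real.norm_of_nonneg (by positivity), one_mul, Real.rpow_neg (norm_nonneg x),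
      Real.sqrt_eq_rpow, Real.norm_eq_abs]
  rw [← (measurePreserving_sub_right volume r).map_eq, ← Homeomorph.coe_subRight] at h0
  exact (locallyIntegrable_map_homeomorph (Homeomorph.subRight r)).1 h0

lemma isBigO_inv_sqrt_abs_of_simple_zero {F : ℝ → ℝ} {F' r : ℝ} (hF : HasDerivAt F F' r)
    (hr : F r = 0) (hF' : F' ≠ 0) :
    (fun x ↦ (√|F x|)⁻¹) =O[𝓝 r] fun x ↦ (√|x - r|)⁻¹ := by
  have hsub : (fun x ↦ x - r) =O[𝓝 r] F := by
    simpa [Function.comp_def, hr] using (hF.isTheta_sub hF').isBigO_symm.comp_tendsto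
      (tendsto_id.prodMk tendsto_const_pure)
  refine (hsub.norm_norm.sqrt (.of_forall fun x ↦ norm_nonneg _)).inv_rev
    (.of_forall fun x hx ↦ ?_)
  have hxr : x = r := by simpa [Real.sqrt_eq_zero', sub_eq_zero] using hx
  simp [hxr, hr]

lemma locallyIntegrable_inv_sqrt_abs_of_simple_zeros {F F' : ℝ → ℝ}
    (hF : ∀ x, HasDerivAt F (F' x) x) (hF' : ∀ x, F x = 0 → F' x ≠ 0) :
    LocallyIntegrable fun x ↦ (√|F x|)⁻¹ := by
  have hcont : Continuous F := continuous_iff_continuousAt.2 fun x ↦ (hF x).continuousAt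
  have hmeas (r : ℝ) : StronglyMeasurableAtFilter (fun x ↦ (√|F x|)⁻¹) (𝓝 r) :=
    hcont.abs.sqrt.measurable.inv.aestronglyMeasurable.stronglyMeasurableAtFilter
  intro r
  by_cases hr : F r = 0
  · exact (isBigO_inv_sqrt_abs_of_simple_zero (hF r) hr (hF' r hr)).integrableAtFilter
      (hmeas r) (locallyIntegrable_inv_sqrt_abs_sub r r)
  · have hcontAt : ContinuousAt (fun x ↦ (√|F x|)⁻¹) r :=
      hcont.abs.sqrt.continuousAt.inv₀ (Real.sqrt_ne_zero'.2 (abs_pos.2 hr))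
    exact (hcontAt.tendsto.isBigO_one ℝ).integrableAtFilter (hmeas r)
      (locallyIntegrable_const (1 : ℝ) r)

end LocalIntegrability

lemma lintegral_eq_add_of_ae_mem_union {α : Type*} [MeasurableSpace α] {μ : Measure α}
    {φ : α → ENNReal} {s t : Set α} (ht : MeasurableSet t) (hst : Disjoint s t)
    (h : ∀ᵐ x ∂μ, φ x ≠ 0 → x ∈ s ∪ t) :
    ∫⁻ x, φ x ∂μ = (∫⁻ x in s, φ x ∂μ) + ∫⁻ x in t, φ x ∂μ := by
  let N := {x | ¬(φ x ≠ 0 → x ∈ s ∪ t)}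
  have hN : (s ∪ t ∪ N : Set α) =ᵐ[μ] (s ∪ t : Set α) :=
    union_ae_eq_left_of_ae_eq_empty (ae_eq_empty.2 (ae_iff.1 h))
  have hsupport : Function.support φ ⊆ s ∪ t ∪ N := fun x hx ↦
    or_iff_not_imp_left.2 fun hst h ↦ hst (h hx)
  rw [← setLIntegral_eq_of_support_subset hsupport, setLIntegral_congr hN, lintegral_union ht hst]

lemma sq_mul_sqrt {σ t : ℝ} (hσ : |σ| = 1) (ht : 0 ≤ t) : (σ * √t) ^ 2 = t := by
  rw [mul_pow, ← sq_abs σ, hσ, one_pow, one_mul, Real.sq_sqrt ht]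

lemma mul_sqrt_sq {σ z : ℝ} (hσ : |σ| = 1) (hz : 0 < σ * z) : σ * √(z ^ 2) = z := by
  have habs : |z| = σ * z := by rw [← abs_of_pos hz, abs_mul, hσ, one_mul]
  rw [Real.sqrt_sq_eq_abs, habs, ← mul_assoc, ← sq, ← sq_abs σ, hσ, one_pow, one_mul]

lemma ae_affine_ne_zero {a b : ℝ} (hab : ¬(a = 0 ∧ b = 0)) : ∀ᵐ x : ℝ, a * x + b ≠ 0 := by
  have hzeros : {x : ℝ | a * x + b = 0}.Subsingleton := by
    intro x (hx : _ = _) y (hy : _ = _)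
    have ha : a ≠ 0 := by
      rintro rfl
      exact hab ⟨rfl, by linarith⟩
    exact mul_left_cancel₀ ha (by linarith)
  exact hzeros.countable.ae_notMem volume

section Mobius

open Set

variable {K : Type*} [Field K]

/-- The Möbius transformation `x ↦ (px + r)/(qx + s)` by which `BQ.twist m` changes the affine
coordinate. -/
def Mat2.mobius (m : Mat2 K) (x : K) : K :=
  (m.p * x + m.r) / (m.q * x + m.s)

variable {m : Mat2 K}

lemma Mat2.mobius_injOn (hm : m.det ≠ 0) :
    InjOn m.mobius {x | m.q * x + m.s ≠ 0} := by
  intro x (hx : _ ≠ _) y (hy : _ ≠ _) hxy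
  rw [Mat2.mobius, Mat2.mobius, div_eq_div_iff hx hy] at hxy
  refine mul_left_cancel₀ hm ?_
  simp only [Mat2.det]
  linear_combination hxy

lemma Mat2.mem_image_mobius (hm : m.det ≠ 0) {y : K}
    (hy : -m.q * y + m.p ≠ 0) : y ∈ m.mobius '' {x | m.q * x + m.s ≠ 0} := by
  let x := (m.s * y - m.r) / (-m.q * y + m.p)
  have hx : x * (-m.q * y + m.p) = m.s * y - m.r := div_mul_cancel₀ _ hy
  have hden : (m.q * x + m.s) * (-m.q * y + m.p) = m.det := by
    simp only [Mat2.det]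
    linear_combination m.q * hx
  have hne : m.q * x + m.s ≠ 0 := left_ne_zero_of_mul (hden ▸ hm)
  refine ⟨x, hne, ?_⟩
  rw [Mat2.mobius, div_eq_iff hne]
  linear_combination hx

end Mobius

lemma Mat2.hasDerivAt_mobius (m : Mat2 ℝ) {x : ℝ} (hx : m.q * x + m.s ≠ 0) :
    HasDerivAt m.mobius (m.det / (m.q * x + m.s) ^ 2) x := by
  have h := (((hasDerivAt_id x).const_mul m.p).add_const m.r).div
    (((hasDerivAt_id x).const_mul m.q).add_const m.s) hx
  refine h.congr_deriv ?_
  simp only [Mat2.det, id]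
  ring

namespace BQ

section Algebra

variable {R : Type*} [CommRing R]

lemma eval_mul_mul (f : BQ R) (k x y : R) : f.eval (k * x) (k * y) = k ^ 4 * f.eval x y := by
  simp only [eval]; ring

lemma invI_rsmul (t : R) (f : BQ R) : (f.rsmul t).invI = t ^ 2 * f.invI := by
  simp only [rsmul, invI]; ring

lemma invJ_rsmul (t : R) (f : BQ R) : (f.rsmul t).invJ = t ^ 3 * f.invJ := by
  simp only [rsmul, invJ]; ring

lemma invI_subst (m : Mat2 R) (f : BQ R) : (f.subst m).invI = m.det ^ 4 * f.invI := by
  simp only [subst, invI, Mat2.det]; ring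

lemma invJ_subst (m : Mat2 R) (f : BQ R) : (f.subst m).invJ = m.det ^ 6 * f.invJ := by
  simp only [subst, invJ, Mat2.det]; ring

lemma twentySeven_mul_disc (f : BQ R) : 27 * f.disc = 4 * f.invI ^ 3 - f.invJ ^ 2 := by
  simp only [invI, invJ, disc]; ring

lemma eval_twist (m : Mat2 R) (f : BQ R) (x y : R) :
    (f.twist m).eval x y =
      Ring.inverse m.det ^ 2 * f.eval (m.p * x + m.r * y) (m.q * x + m.s * y) := by
  simp only [twist, rsmul, subst, eval]; ring

lemma invI_twist {m : Mat2 R} (hm : IsUnit m.det) (f : BQ R) :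
    (f.twist m).invI = f.invI := by
  have hdet := Ring.inverse_mul_cancel _ hm
  calc (f.twist m).invI
      = (Ring.inverse m.det * m.det) ^ 4 * f.invI := by
        rw [twist, invI_rsmul, invI_subst]; ring
    _ = f.invI := by rw [hdet, one_pow, one_mul]

lemma invJ_twist {m : Mat2 R} (hm : IsUnit m.det) (f : BQ R) :
    (f.twist m).invJ = f.invJ := by
  have hdet := Ring.inverse_mul_cancel _ hm
  calc (f.twist m).invJ
      = (Ring.inverse m.det * m.det) ^ 6 * f.invJ := by
        rw [twist, invJ_rsmul, invJ_subst]; ring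
    _ = f.invJ := by rw [hdet, one_pow, one_mul]

lemma disc_twist [IsDomain R] [CharZero R] {m : Mat2 R} (hm : IsUnit m.det) (f : BQ R) :
    (f.twist m).disc = f.disc := by
  refine mul_left_cancel₀ (OfNat.ofNat_ne_zero 27) ?_
  rw [twentySeven_mul_disc, twentySeven_mul_disc, invI_twist hm, invJ_twist hm]

/-- The partial derivative `∂f/∂x` of a binary quartic form. -/
def dx (f : BQ R) (x y : R) : R :=
  4 * f.a * x ^ 3 + 3 * f.b * x ^ 2 * y + 2 * f.c * x * y ^ 2 + f.d * y ^ 3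

/-- The partial derivative `∂f/∂y` of a binary quartic form. -/
def dy (f : BQ R) (x y : R) : R :=
  f.b * x ^ 3 + 2 * f.c * x ^ 2 * y + 3 * f.d * x * y ^ 2 + 4 * f.e * y ^ 3

lemma euler_identity (f : BQ R) (x y : R) : x * f.dx x y + y * f.dy x y = 4 * f.eval x y := by
  simp only [dx, dy, eval]; ring

lemma twist_a (m : Mat2 R) (f : BQ R) :
    (f.twist m).a = Ring.inverse m.det ^ 2 * f.eval m.p m.q := by
  simp only [twist, rsmul, subst, eval]

lemma twist_b (m : Mat2 R) (f : BQ R) :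
    (f.twist m).b = Ring.inverse m.det ^ 2 * (m.r * f.dx m.p m.q + m.s * f.dy m.p m.q) := by
  simp only [twist, rsmul, subst, dx, dy]; ring

lemma finite_zeros [IsDomain R] {f : BQ R} (hf : f ≠ ⟨0, 0, 0, 0, 0⟩) :
    {x | f.eval x 1 = 0}.Finite := by
  open Polynomial in
  let P : R[X] := C f.a * X ^ 4 + C f.b * X ^ 3 + C f.c * X ^ 2 + C f.d * X + C f.e
  have hP : P ≠ 0 := by
    refine fun hP ↦ hf ?_
    have hcoeff (n : ℕ) : P.coeff n = 0 := by rw [hP, Polynomial.coeff_zero]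
    have ha := hcoeff 4
    have hb := hcoeff 3
    have hc := hcoeff 2
    have hd := hcoeff 1
    have he := hcoeff 0
    simp [P, Polynomial.coeff_X, Polynomial.coeff_C] at ha hb hc hd he
    cases f
    simp_all only
  refine (Polynomial.finite_setOfPred_isRoot hP).subset fun x hx ↦ ?_
  simpa [P, eval] using hx

/-- The quartic form `x⁴ + cx²y² + dxy³ + ey⁴`. -/
def depressed (c d e : R) : BQ R := ⟨1, 0, c, d, e⟩

/-- The form `x³y - 2cx²y² + (c² - 4e)xy³ + d²y⁴` attached to the resolvent cubic of
`depressed c d e`; it differs from the Jacobian by a translation. -/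
def resolvent (c d e : R) : BQ R := ⟨0, 1, -(2 * c), c ^ 2 - 4 * e, d ^ 2⟩

lemma disc_depressed_eq_zero {c d e : R} (hd : d = 0) (he : c ^ 2 = 4 * e) :
    (depressed c d e).disc = 0 := by
  simp only [depressed, disc, hd]
  linear_combination 16 * e * (c ^ 2 - 4 * e) * he

-- On the curve `z² = x⁴ + cx² + dx + e` this says that `(u, v) = (c - 2(z - x²), 2xu + d)` is a
-- point of `v² = u³ - 2cu² + (c² - 4e)u + d²`.
lemma sq_sub_eval_resolvent (c d e x z u : R) (hu : u = c - 2 * (z - x ^ 2)) :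
    (2 * x * u + d) ^ 2 - (resolvent c d e).eval u 1
      = 4 * u * ((depressed c d e).eval x 1 - z ^ 2) := by
  subst hu
  simp only [resolvent, depressed, eval]
  ring

end Algebra

section Field

variable {K : Type*} [Field K]

/-- The form `x³y - (I/3)xy³ - (J/27)y⁴`, whose dehomogenization is the cubic defining the
Jacobian of `z² = f(x, y)`. -/
def jacobian (f : BQ K) : BQ K := ⟨0, 1, 0, -(f.invI / 3), -(f.invJ / 27)⟩

lemma eval_jacobian_one (f : BQ K) (x : K) :
    f.jacobian.eval x 1 = x ^ 3 - (f.invI / 3) * x - (f.invJ / 27) := by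
  simp only [jacobian, eval]; ring

lemma jacobian_twist {m : Mat2 K} (hm : m.det ≠ 0) (f : BQ K) :
    (f.twist m).jacobian = f.jacobian := by
  rw [jacobian, jacobian, invI_twist hm.isUnit, invJ_twist hm.isUnit]

variable [CharZero K]

lemma disc_jacobian (f : BQ K) : f.jacobian.disc = f.disc := by
  refine mul_left_cancel₀ (OfNat.ofNat_ne_zero 27) ?_
  rw [twentySeven_mul_disc f]
  simp only [jacobian, disc]
  field_simp
  ring

lemma disc_eq_zero_of_singular {f : BQ K} {p q : K} (hpq : ¬(p = 0 ∧ q = 0))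
    (h0 : f.eval p q = 0) (hx : f.dx p q = 0) (hy : f.dy p q = 0) : f.disc = 0 := by
  obtain ⟨r, s, hdet⟩ : ∃ r s : K, p * s - q * r ≠ 0 := by
    by_cases hp : p = 0
    · exact ⟨1, 0, by simpa [hp] using hpq⟩
    · exact ⟨0, 1, by simpa using hp⟩
  have ha : (f.twist ⟨p, q, r, s⟩).a = 0 := by simp only [twist_a, h0, mul_zero]
  have hb : (f.twist ⟨p, q, r, s⟩).b = 0 := by simp only [twist_b, hx, hy, mul_zero, add_zero]
  rw [← disc_twist (m := ⟨p, q, r, s⟩) (IsUnit.mk0 _ hdet) f]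
  simp only [disc, ha, hb]
  ring

lemma dx_ne_zero_of_eval_eq_zero {f : BQ K} (hf : f.disc ≠ 0) {x : K}
    (hx : f.eval x 1 = 0) : f.dx x 1 ≠ 0 := by
  refine fun hdx ↦ hf (disc_eq_zero_of_singular (p := x) (q := 1) (by simp) hx hdx ?_)
  simpa [hx, hdx] using f.euler_identity x 1

-- The second row of the matrix is orthogonal to the gradient of `f` at the point given by the
-- first, which kills the coefficient `b`; Euler's identity makes the determinant equal to `z`.
lemma exists_twist_eq_depressed {f : BQ K} {p q z : K} (hz : z ≠ 0)
    (h : z ^ 2 = f.eval p q) :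
    ∃ m : Mat2 K, m.det ≠ 0 ∧ ∃ c d e, f.twist m = depressed c d e := by
  let m : Mat2 K := ⟨p, q, -(f.dy p q / (4 * z)), f.dx p q / (4 * z)⟩
  have hdet : m.det = z := by
    simp only [m, Mat2.det]
    field_simp
    linear_combination f.euler_identity p q - 4 * h
  have ha : (f.twist m).a = 1 := by
    rw [twist_a, hdet, Ring.inverse_eq_inv', ← h]
    field_simp
  have hb : (f.twist m).b = 0 := by
    rw [twist_b]
    ring
  exact ⟨m, hdet ▸ hz, (f.twist m).c, (f.twist m).d, (f.twist m).e,
    by rw [depressed, ← ha, ← hb]⟩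

lemma resolvent_twist (c d e : K) :
    (resolvent c d e).twist ⟨1, 0, 2 * c / 3, 1⟩ = (depressed c d e).jacobian := by
  simp only [resolvent, twist, rsmul, subst, Mat2.det, depressed, jacobian,
    invI, invJ, BQ.mk.injEq]
  refine ⟨?_, ?_, ?_, ?_, ?_⟩ <;> simp <;> field_simp <;> ring

lemma exists_point_over_resolvent {c d e u v : K} (hu : u ≠ 0)
    (hv : v ^ 2 = (resolvent c d e).eval u 1) :
    ∃ x z, z ^ 2 = (depressed c d e).eval x 1 ∧ u = c - 2 * (z - x ^ 2) ∧
      v = 2 * x * u + d := by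
  obtain ⟨x, hx⟩ : ∃ x, v = 2 * x * u + d := ⟨(v - d) / (2 * u), by field_simp; ring⟩
  obtain ⟨z, hz⟩ : ∃ z, u = c - 2 * (z - x ^ 2) := ⟨x ^ 2 + (c - u) / 2, by field_simp; ring⟩
  refine ⟨x, z, ?_, hz, hx⟩
  have hpoint := sq_sub_eval_resolvent c d e x z u hz
  rw [← hx, hv, sub_self] at hpoint
  have hu4 : 4 * u ≠ 0 := mul_ne_zero (OfNat.ofNat_ne_zero 4) hu
  exact (sub_eq_zero.1 ((mul_eq_zero.1 hpoint.symm).resolve_left hu4)).symm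

end Field

section RealForms

lemma continuous_eval_one (f : BQ ℝ) : Continuous fun x ↦ f.eval x 1 := by
  simp only [eval]; fun_prop

lemma hasDerivAt_eval_left (f : BQ ℝ) (x y : ℝ) :
    HasDerivAt (fun x ↦ f.eval x y) (f.dx x y) x := by
  have h := (((((hasDerivAt_pow 4 x).const_mul f.a).add
    (((hasDerivAt_pow 3 x).const_mul f.b).mul_const y)).add
    (((hasDerivAt_pow 2 x).const_mul f.c).mul_const (y ^ 2))).add
    (((hasDerivAt_id x).const_mul f.d).mul_const (y ^ 3))).add_const (f.e * y ^ 4)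
  refine h.congr_deriv ?_
  simp only [dx]
  norm_num
  ring

lemma hasDerivAt_eval_right (f : BQ ℝ) (x y : ℝ) :
    HasDerivAt (fun y ↦ f.eval x y) (f.dy x y) y := by
  have h := (hasDerivAt_eval_left ⟨f.e, f.d, f.c, f.b, f.a⟩ y x)
  refine (h.congr_deriv ?_).congr_of_eventuallyEq (.of_forall fun z ↦ ?_)
  · simp only [dx, dy]; ring
  · simp only [eval]; ring

lemma exists_eval_pos {f : BQ ℝ} (hf : f.disc ≠ 0) {p q : ℝ} (hpq : ¬(p = 0 ∧ q = 0))
    (hnonneg : 0 ≤ f.eval p q) : ∃ x y, 0 < f.eval x y := by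
  by_contra! hneg
  have h0 : f.eval p q = 0 := le_antisymm (hneg p q) hnonneg
  have hmax_left : IsLocalMax (fun x ↦ f.eval x q) p :=
    .of_forall fun x ↦ (hneg x q).trans_eq h0.symm
  have hmax_right : IsLocalMax (fun y ↦ f.eval p y) q :=
    .of_forall fun y ↦ (hneg p y).trans_eq h0.symm
  exact hf (disc_eq_zero_of_singular hpq h0
    (hmax_left.hasDerivAt_eq_zero (f.hasDerivAt_eval_left p q))
    (hmax_right.hasDerivAt_eq_zero (f.hasDerivAt_eval_right p q)))

lemma locallyIntegrable_inv_sqrt_abs_eval {f : BQ ℝ} (hf : f.disc ≠ 0) :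
    LocallyIntegrable fun x ↦ (√|f.eval x 1|)⁻¹ :=
  locallyIntegrable_inv_sqrt_abs_of_simple_zeros (fun x ↦ f.hasDerivAt_eval_left x 1)
    fun _ ↦ dx_ne_zero_of_eval_eq_zero hf

open Set in
-- The inversion `x = u⁻¹` turns the neighbourhood of infinity into `[-1, 1]` and `f` into the
-- form with reversed coefficients, so local integrability suffices.
lemma integrable_inv_sqrt_abs_eval {f : BQ ℝ} (hf : f.disc ≠ 0) :
    Integrable fun x ↦ (√|f.eval x 1|)⁻¹ := by
  let g := f.twist ⟨0, 1, 1, 0⟩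
  have hdet : IsUnit (⟨0, 1, 1, 0⟩ : Mat2 ℝ).det := by simp [Mat2.det]
  have hg : g.disc ≠ 0 := by rwa [disc_twist hdet]
  have hinv (u : ℝ) (hu : u ≠ 0) : g.eval u 1 = (u ^ 2) ^ 2 * f.eval u⁻¹ 1 := by
    have h := f.eval_mul_mul u u⁻¹ 1
    rw [mul_inv_cancel₀ hu] at h
    rw [← pow_mul, ← h, eval_twist]
    simp [Mat2.det]
  let s : Set ℝ := Icc (-1) 1 \ {0}
  have hs : MeasurableSet s := measurableSet_Icc.diff (measurableSet_singleton 0)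
  have hfar : IntegrableOn (fun x ↦ (√|f.eval x 1|)⁻¹) (Inv.inv '' s) := by
    rw [integrableOn_image_iff_integrableOn_abs_deriv_smul hs
      (fun u hu ↦ (hasDerivAt_inv hu.2).hasDerivWithinAt) inv_injective.injOn]
    refine (((locallyIntegrable_inv_sqrt_abs_eval hg).integrableOn_isCompact
      isCompact_Icc).mono_set sdiff_subset).congr_fun (fun u hu ↦ ?_) hs
    simp only [hinv u hu.2, abs_mul, abs_pow, sq_abs, abs_neg, abs_inv, smul_eq_mul]
    rw [Real.sqrt_mul (by positivity), Real.sqrt_sq (by positivity), mul_inv]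
  have hnear : IntegrableOn (fun x ↦ (√|f.eval x 1|)⁻¹) (Icc (-1) 1) :=
    (locallyIntegrable_inv_sqrt_abs_eval hf).integrableOn_isCompact isCompact_Icc
  rw [← integrableOn_univ]
  refine (hnear.union hfar).mono_set fun x _ ↦ ?_
  by_cases hx : |x| ≤ 1
  · exact .inl (abs_le.1 hx)
  · refine .inr ⟨x⁻¹, ⟨abs_le.1 ?_, ?_⟩, inv_inv x⟩
    · rw [abs_inv]
      exact inv_le_one_of_one_le₀ (not_le.1 hx).le
    · rintro (h : x⁻¹ = 0)
      simp [inv_eq_zero.1 h] at hx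

lemma integrable_inv_sqrt_eval {f : BQ ℝ} (hf : f.disc ≠ 0) :
    Integrable fun x ↦ (√(f.eval x 1))⁻¹ := by
  refine (integrable_inv_sqrt_abs_eval hf).mono
    f.continuous_eval_one.sqrt.measurable.inv.aestronglyMeasurable (.of_forall fun x ↦ ?_)
  rw [Real.norm_of_nonneg (by positivity), Real.norm_of_nonneg (by positivity)]
  rcases le_or_gt (f.eval x 1) 0 with h | h
  · rw [Real.sqrt_eq_zero_of_nonpos h, inv_zero]
    positivity
  · rw [abs_of_pos h]

end RealForms

section Period

open Set

/-- The density `f(x, 1)^(-1/2)` of the differential `dx/z` on the curve `z² = f(x, 1)`. The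
conventions `√t = 0` for `t ≤ 0` and `0⁻¹ = 0` make it vanish wherever `f(x, 1) ≤ 0`. -/
def periodDensity (f : BQ ℝ) (x : ℝ) : ENNReal := ENNReal.ofReal (√(f.eval x 1))⁻¹

/-- The real period of `z² = f(x, 1)`: the possibly infinite integral of `dx/z` over the points
with `z > 0`. -/
def realPeriod (f : BQ ℝ) : ENNReal := ∫⁻ x, f.periodDensity x

lemma periodDensity_ne_zero_iff (f : BQ ℝ) (x : ℝ) :
    f.periodDensity x ≠ 0 ↔ 0 < f.eval x 1 := by
  simp [periodDensity]

lemma setIntegral_inv_sqrt_eval (f : BQ ℝ) :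
    ∫ x in {x | 0 < f.eval x 1}, (√(f.eval x 1))⁻¹ = f.realPeriod.toReal := by
  have hmeas : Measurable fun x ↦ (√(f.eval x 1))⁻¹ := f.continuous_eval_one.sqrt.measurable.inv
  rw [integral_eq_lintegral_of_nonneg_ae (.of_forall fun x ↦ by positivity)
    hmeas.aestronglyMeasurable]
  exact congrArg ENNReal.toReal (setLIntegral_eq_of_support_subset fun x ↦
    (f.periodDensity_ne_zero_iff x).1)

end Period

section PeriodTwist

open Set

lemma eval_twist_one {K : Type*} [Field K] (m : Mat2 K) (f : BQ K) {x : K}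
    (hx : m.q * x + m.s ≠ 0) :
    (f.twist m).eval x 1 = ((m.det / (m.q * x + m.s) ^ 2)⁻¹) ^ 2 * f.eval (m.mobius x) 1 := by
  have h := f.eval_mul_mul (m.q * x + m.s) (m.mobius x) 1
  rw [Mat2.mobius, mul_div_cancel₀ _ hx, ← Mat2.mobius, mul_one] at h
  rw [eval_twist, mul_one, mul_one, h, Ring.inverse_eq_inv', inv_div, div_pow]
  ring

lemma realPeriod_twist {m : Mat2 ℝ} (hm : m.det ≠ 0) (f : BQ ℝ) :
    (f.twist m).realPeriod = f.realPeriod := by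
  have hdet : m.p * m.s - m.q * m.r ≠ 0 := hm
  let s := {x : ℝ | m.q * x + m.s ≠ 0}
  have hs : MeasurableSet s := (isOpen_ne_fun (by fun_prop) continuous_const).measurableSet
  have hsource : ∀ᵐ x, x ∈ s :=
    ae_affine_ne_zero fun ⟨hq, hs⟩ ↦ hdet (by rw [hq, hs]; ring)
  have htarget : ∀ᵐ y, y ∈ m.mobius '' s :=
    (ae_affine_ne_zero fun ⟨hq, hp⟩ ↦ hdet (by rw [neg_eq_zero.1 hq, hp]; ring)).mono
      fun y ↦ Mat2.mem_image_mobius hm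
  calc (f.twist m).realPeriod
      = ∫⁻ x in s, (f.twist m).periodDensity x := by
        rw [Measure.restrict_eq_self_of_ae_mem hsource, realPeriod]
    _ = ∫⁻ x in s, ENNReal.ofReal |m.det / (m.q * x + m.s) ^ 2| *
          f.periodDensity (m.mobius x) := by
        refine setLIntegral_congr_fun hs fun x hx ↦ ?_
        simp only [periodDensity, eval_twist_one m f hx]
        rw [← ENNReal.ofReal_mul (abs_nonneg _), Real.sqrt_mul (sq_nonneg _),
          Real.sqrt_sq_eq_abs, mul_inv, abs_inv, inv_inv]
    _ = ∫⁻ y in m.mobius '' s, f.periodDensity y :=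
        (lintegral_image_eq_lintegral_abs_deriv_mul hs
          (fun x hx ↦ (m.hasDerivAt_mobius hx).hasDerivWithinAt) (Mat2.mobius_injOn hm) _).symm
    _ = f.realPeriod := by
        rw [Measure.restrict_eq_self_of_ae_mem htarget, realPeriod]

end PeriodTwist

section ResolventMap

open Set

/-- The coordinate `u = c - 2(z - x²)` of the map from `z² = x⁴ + cx² + dx + e` to the resolvent
curve, along the branch `z = σ√(x⁴ + cx² + dx + e)`. -/
def branchU (c d e σ x : ℝ) : ℝ := c - 2 * (σ * √((depressed c d e).eval x 1) - x ^ 2)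

/-- The coordinate `v = 2xu + d` of the map to the resolvent curve, along the branch of sign
`σ`. -/
def branchV (c d e σ x : ℝ) : ℝ := 2 * x * branchU c d e σ x + d

/-- The points at which the branch of sign `σ` is defined, lands off the line `u = 0` and has `v`
of sign `τ`. -/
def branchDomain (c d e σ τ : ℝ) : Set ℝ :=
  {x | 0 < (depressed c d e).eval x 1 ∧ branchU c d e σ x ≠ 0 ∧ 0 < τ * branchV c d e σ x}

variable {c d e σ σ' τ x x' u z : ℝ}

lemma measurable_branchU : Measurable (branchU c d e σ) := by
  have h := (depressed c d e).continuous_eval_one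
  unfold branchU
  fun_prop

lemma measurableSet_branchDomain : MeasurableSet (branchDomain c d e σ τ) := by
  have hF := (depressed c d e).continuous_eval_one.measurable
  have hU : Measurable (branchU c d e σ) := measurable_branchU
  have hV : Measurable fun x ↦ τ * branchV c d e σ x := by
    unfold branchV
    fun_prop
  exact (measurableSet_lt measurable_const hF).inter
    ((measurableSet_eq_fun hU measurable_const).compl.inter
      (measurableSet_lt measurable_const hV))

lemma disjoint_branchDomain :
    Disjoint (branchDomain c d e σ 1) (branchDomain c d e σ (-1)) := by
  refine disjoint_left.2 fun x hpos hneg ↦ ?_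
  linarith [hpos.2.2, hneg.2.2]

lemma branchV_sq (hσ : |σ| = 1) (hx : 0 ≤ (depressed c d e).eval x 1) :
    branchV c d e σ x ^ 2 = (resolvent c d e).eval (branchU c d e σ x) 1 := by
  have h := sq_sub_eval_resolvent c d e x (σ * √((depressed c d e).eval x 1))
    (branchU c d e σ x) rfl
  rw [sq_mul_sqrt hσ hx, sub_self, mul_zero] at h
  exact sub_eq_zero.1 h

-- Up to sign this is the pullback formula `du/v = -dx/z` for the invariant differentials.
lemma hasDerivAt_branchU (hσ : |σ| = 1) (hx : 0 < (depressed c d e).eval x 1) :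
    HasDerivAt (branchU c d e σ)
      (-(σ * branchV c d e σ x / √((depressed c d e).eval x 1))) x := by
  have hσ2 : σ ^ 2 = 1 := by rw [← sq_abs, hσ, one_pow]
  have hsqrt := Real.sqrt_pos.2 hx
  have h := ((((hasDerivAt_eval_left _ x 1).sqrt hx.ne').const_mul σ).sub
    (hasDerivAt_pow 2 x)).const_mul 2 |>.const_sub c
  refine h.congr_deriv ?_
  simp only [branchV, branchU, dx]
  generalize √((depressed c d e).eval x 1) = s at hsqrt
  simp only [depressed]
  field_simp
  norm_num
  linear_combination (-(4 * x * s)) * hσ2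

lemma branch_inj (hσ : |σ| = 1) (hσ' : |σ'| = 1) (hx : x ∈ branchDomain c d e σ τ)
    (hx' : x' ∈ branchDomain c d e σ' τ) (hu : branchU c d e σ x = branchU c d e σ' x') :
    x = x' ∧ σ = σ' := by
  obtain ⟨hF, hU, hV⟩ := hx
  obtain ⟨hF', -, hV'⟩ := hx'
  have hv : branchV c d e σ x = branchV c d e σ' x' := by
    refine mul_left_cancel₀ (left_ne_zero_of_mul hV.ne')
      ((pow_left_inj₀ hV.le hV'.le two_ne_zero).1 ?_)
    rw [mul_pow, mul_pow, branchV_sq hσ hF.le, branchV_sq hσ' hF'.le, hu]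
  have hxx' : x = x' := by
    refine mul_right_cancel₀ hU ?_
    rw [branchV, branchV, ← hu] at hv
    linarith
  subst hxx'
  refine ⟨rfl, mul_right_cancel₀ (Real.sqrt_pos.2 hF).ne' ?_⟩
  rw [branchU, branchU] at hu
  linarith

lemma injOn_branchU (hσ : |σ| = 1) : InjOn (branchU c d e σ) (branchDomain c d e σ τ) :=
  fun _ hx _ hx' hu ↦ (branch_inj hσ hσ hx hx' hu).1

lemma setLIntegral_branchDomain (hσ : |σ| = 1) :
    ∫⁻ x in branchDomain c d e σ τ, (depressed c d e).periodDensity x =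
      ∫⁻ u in branchU c d e σ '' branchDomain c d e σ τ,
        (resolvent c d e).periodDensity u := by
  rw [lintegral_image_eq_lintegral_abs_deriv_mul measurableSet_branchDomain
    (fun x hx ↦ (hasDerivAt_branchU hσ hx.1).hasDerivWithinAt) (injOn_branchU hσ)]
  refine setLIntegral_congr_fun measurableSet_branchDomain fun x hx ↦ ?_
  have hV : |branchV c d e σ x| ≠ 0 := abs_ne_zero.2 (right_ne_zero_of_mul hx.2.2.ne')
  simp only [periodDensity]
  rw [← ENNReal.ofReal_mul (abs_nonneg _), ← branchV_sq hσ hx.1.le, Real.sqrt_sq_eq_abs,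
    abs_neg, abs_div, abs_mul, hσ, one_mul, abs_of_nonneg (Real.sqrt_nonneg _),
    div_mul_eq_mul_div, mul_inv_cancel₀ hV, one_div]

-- On a fibre of `u` the polynomial `z = x² + (c - u)/2` is a square root of the quartic, and the
-- difference of the quartic and its square is the quadratic `ux² + dx + e - ((c - u)/2)²`.
lemma finite_fiber_branchU (hσ : |σ| = 1) (hns : ¬(d = 0 ∧ c ^ 2 = 4 * e)) (u : ℝ) :
    {x | 0 < (depressed c d e).eval x 1 ∧ branchU c d e σ x = u}.Finite := by
  have hne : (⟨0, 0, u, d, e - ((c - u) / 2) ^ 2⟩ : BQ ℝ) ≠ ⟨0, 0, 0, 0, 0⟩ := by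
    simp only [ne_eq, BQ.mk.injEq, true_and]
    rintro ⟨rfl, hd, he⟩
    exact hns ⟨hd, by linarith⟩
  refine (finite_zeros hne).subset fun x ⟨hF, hu⟩ ↦ ?_
  have hz : σ * √((depressed c d e).eval x 1) = x ^ 2 + (c - u) / 2 := by
    rw [← hu, branchU]
    ring
  have h := sq_mul_sqrt hσ hF.le
  rw [hz] at h
  simp only [depressed, eval] at h
  simp only [mem_ofPred_eq, eval]
  linear_combination -h

lemma finite_branch_zeros (hσ : |σ| = 1) (hns : ¬(d = 0 ∧ c ^ 2 = 4 * e)) :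
    {x | 0 < (depressed c d e).eval x 1 ∧
      (branchU c d e σ x = 0 ∨ branchV c d e σ x = 0)}.Finite := by
  have hres : resolvent c d e ≠ ⟨0, 0, 0, 0, 0⟩ := by simp [resolvent]
  refine Set.Finite.subset (((finite_singleton 0).union (finite_zeros hres)).biUnion
    fun u _ ↦ finite_fiber_branchU hσ hns u) fun x ⟨hF, h⟩ ↦ mem_biUnion ?_ ⟨hF, rfl⟩
  refine h.imp id fun hV ↦ ?_
  rw [mem_ofPred_eq, ← branchV_sq hσ hF.le, hV, sq, zero_mul]

lemma realPeriod_depressed_eq_add (hσ : |σ| = 1) (hns : ¬(d = 0 ∧ c ^ 2 = 4 * e)) :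
    (depressed c d e).realPeriod =
      (∫⁻ x in branchDomain c d e σ 1, (depressed c d e).periodDensity x) +
        ∫⁻ x in branchDomain c d e σ (-1), (depressed c d e).periodDensity x := by
  refine lintegral_eq_add_of_ae_mem_union measurableSet_branchDomain disjoint_branchDomain ?_
  filter_upwards [(finite_branch_zeros hσ hns).countable.ae_notMem volume] with x hx hdens
  have hF := (periodDensity_ne_zero_iff _ x).1 hdens
  obtain ⟨hU, hV⟩ : branchU c d e σ x ≠ 0 ∧ branchV c d e σ x ≠ 0 := by
    simpa [hF] using hx
  exact hV.gt_or_lt.imp (fun h ↦ ⟨hF, hU, by simpa using h⟩) fun h ↦ ⟨hF, hU, by simpa using h⟩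

lemma mem_image_branchU (hσ : |σ| = 1) (hz : z ^ 2 = (depressed c d e).eval x 1)
    (hσz : 0 < σ * z) (hu : u = c - 2 * (z - x ^ 2)) (hu0 : u ≠ 0)
    (hv : 0 < τ * (2 * x * u + d)) : u ∈ branchU c d e σ '' branchDomain c d e σ τ := by
  have hU : branchU c d e σ x = u := by rw [branchU, ← hz, mul_sqrt_sq hσ hσz, hu]
  refine ⟨x, ⟨?_, hU ▸ hu0, by rwa [branchV, hU]⟩, hU⟩
  rw [← hz]
  exact sq_pos_of_ne_zero (right_ne_zero_of_mul hσz.ne')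

lemma finite_resolvent_exceptions :
    ({0} ∪ (fun x ↦ c + 2 * x ^ 2) '' {x | (depressed c d e).eval x 1 = 0}).Finite := by
  have hne : depressed c d e ≠ ⟨0, 0, 0, 0, 0⟩ := by simp [depressed]
  exact (finite_singleton 0).union ((finite_zeros hne).image _)

lemma realPeriod_resolvent_eq_add (hτ : |τ| = 1) :
    (resolvent c d e).realPeriod =
      (∫⁻ u in branchU c d e 1 '' branchDomain c d e 1 τ,
        (resolvent c d e).periodDensity u) +
        ∫⁻ u in branchU c d e (-1) '' branchDomain c d e (-1) τ,
          (resolvent c d e).periodDensity u := by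
  have hneg : |(-1 : ℝ)| = 1 := by simp
  refine lintegral_eq_add_of_ae_mem_union
    (measurableSet_branchDomain.image_of_measurable_injOn measurable_branchU
      (injOn_branchU hneg)) ?_ ?_
  · rw [disjoint_left]
    rintro _ ⟨x, hx, rfl⟩ ⟨x', hx', hu⟩
    have := (branch_inj hneg abs_one hx' hx hu).2
    norm_num at this
  · filter_upwards [(finite_resolvent_exceptions (c := c) (d := d) (e := e)).countable.ae_notMem
      volume] with u hu hdens
    simp only [mem_union, mem_singleton_iff, mem_image, not_or] at hu
    have hpos := (periodDensity_ne_zero_iff _ u).1 hdens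
    obtain ⟨x, z, hz, huz, hv⟩ :=
      exists_point_over_resolvent hu.1 (sq_mul_sqrt hτ hpos.le)
    have hτv : 0 < τ * (2 * x * u + d) := by
      rw [← hv, ← mul_assoc, ← sq, ← sq_abs τ, hτ, one_pow, one_mul]
      exact Real.sqrt_pos.2 hpos
    have hz0 : z ≠ 0 := by
      rintro rfl
      exact hu.2 ⟨x, by rw [mem_ofPred_eq, ← hz]; norm_num, by rw [huz]; ring⟩
    exact hz0.gt_or_lt.imp
      (fun h ↦ mem_image_branchU abs_one hz (by simpa using h) huz hu.1 hτv)
      (fun h ↦ mem_image_branchU hneg hz (by simpa using h) huz hu.1 hτv)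

lemma realPeriod_depressed_eq_realPeriod_resolvent (hns : ¬(d = 0 ∧ c ^ 2 = 4 * e)) :
    (depressed c d e).realPeriod = (resolvent c d e).realPeriod := by
  have hneg : |(-1 : ℝ)| = 1 := by simp
  have hpos : |(1 : ℝ)| = 1 := abs_one
  let piece (σ τ : ℝ) := ∫⁻ x in branchDomain c d e σ τ, (depressed c d e).periodDensity x
  have hdep {σ : ℝ} (hσ : |σ| = 1) :
      (depressed c d e).realPeriod = piece σ 1 + piece σ (-1) :=
    realPeriod_depressed_eq_add hσ hns
  have hres {τ : ℝ} (hτ : |τ| = 1) :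
      (resolvent c d e).realPeriod = piece 1 τ + piece (-1) τ := by
    rw [realPeriod_resolvent_eq_add hτ, ← setLIntegral_branchDomain hpos,
      ← setLIntegral_branchDomain hneg]
  refine (ENNReal.mul_right_inj two_ne_zero ENNReal.ofNat_ne_top).1 ?_
  calc 2 * (depressed c d e).realPeriod
      = (piece 1 1 + piece 1 (-1)) + (piece (-1) 1 + piece (-1) (-1)) := by
        rw [two_mul, ← hdep hpos, ← hdep hneg]
    _ = (piece 1 1 + piece (-1) 1) + (piece 1 (-1) + piece (-1) (-1)) := add_add_add_comm ..
    _ = 2 * (resolvent c d e).realPeriod := by rw [two_mul, ← hres hpos, ← hres hneg]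

end ResolventMap

lemma realPeriod_jacobian {f : BQ ℝ} (hf : f.disc ≠ 0) {p q : ℝ} (hpq : ¬(p = 0 ∧ q = 0))
    (hnonneg : 0 ≤ f.eval p q) : f.jacobian.realPeriod = f.realPeriod := by
  obtain ⟨x, y, hpos⟩ := exists_eval_pos hf hpq hnonneg
  obtain ⟨m, hm, c, d, e, hdep⟩ :=
    exists_twist_eq_depressed (Real.sqrt_pos.2 hpos).ne' (Real.sq_sqrt hpos.le)
  have hns : ¬(d = 0 ∧ c ^ 2 = 4 * e) := fun ⟨hd, he⟩ ↦ hf <| by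
    rw [← disc_twist hm.isUnit, hdep, disc_depressed_eq_zero hd he]
  calc f.jacobian.realPeriod
      = (depressed c d e).jacobian.realPeriod := by rw [← hdep, jacobian_twist hm]
    _ = (resolvent c d e).realPeriod := by
        rw [← resolvent_twist, realPeriod_twist (by simp [Mat2.det])]
    _ = (depressed c d e).realPeriod := (realPeriod_depressed_eq_realPeriod_resolvent hns).symm
    _ = f.realPeriod := by rw [← hdep, realPeriod_twist hm]

end BQ

/-- If `f` is an `ℝ`-soluble binary quartic form with nonzero
discriminant and invariants `I, J`, and `g(x) = x³ − (I/3)x − (J/27)`, then the real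
period integrals `∫_{f(x,1)>0} f(x,1)^{−1/2} dx` and `∫_{g>0} g^{−1/2} dx` are both
finite and equal. -/
theorem real_period_integral (f : BQ ℝ) (hΔ : f.disc ≠ 0)
    (hsol : ∃ x₀ y₀ z₀ : ℝ, ¬(x₀ = 0 ∧ y₀ = 0) ∧ z₀ ^ 2 = f.eval x₀ y₀) :
    IntegrableOn (fun x : ℝ => (Real.sqrt (f.eval x 1))⁻¹) {x : ℝ | 0 < f.eval x 1} ∧
    IntegrableOn
      (fun x : ℝ => (Real.sqrt (x ^ 3 - (f.invI / 3) * x - (f.invJ / 27)))⁻¹)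
      {x : ℝ | 0 < x ^ 3 - (f.invI / 3) * x - (f.invJ / 27)} ∧
    (∫ x in {x : ℝ | 0 < f.eval x 1}, (Real.sqrt (f.eval x 1))⁻¹)
      = ∫ x in {x : ℝ | 0 < x ^ 3 - (f.invI / 3) * x - (f.invJ / 27)},
          (Real.sqrt (x ^ 3 - (f.invI / 3) * x - (f.invJ / 27)))⁻¹ := by
  obtain ⟨p, q, z, hpq, hz⟩ := hsol
  have hperiod : f.jacobian.realPeriod = f.realPeriod :=
    BQ.realPeriod_jacobian hΔ hpq (hz ▸ sq_nonneg z)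
  have hjac : f.jacobian.disc ≠ 0 := f.disc_jacobian.trans_ne hΔ
  simp only [← BQ.eval_jacobian_one]
  refine ⟨(BQ.integrable_inv_sqrt_eval hΔ).integrableOn,
    (BQ.integrable_inv_sqrt_eval hjac).integrableOn, ?_⟩
  rw [BQ.setIntegral_inv_sqrt_eval, BQ.setIntegral_inv_sqrt_eval, hperiod]

end BQPaper
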